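/- Let A₁ and A₂ be n-outcome PVMs on ℂ^d with A₁ ≠ A₂. Then B(A₁,A₂) = 0. -/

import Mathlib

open scoped BigOperators Kronecker ComplexOrder Matrix

noncomputable section

/-- The positive semidefinite square root of a positive semidefinite matrix
(Mathlib's former `Matrix.PosSemidef.sqrt`, since removed, with its old definition). -/
noncomputable def Matrix.PosSemidef.sqrt {n 𝕜 : Type*} [Fintype n] [RCLike 𝕜] [DecidableEq n]
    {A : Matrix n n 𝕜} (hA : A.PosSemidef) : Matrix n n 𝕜 :=
  (hA.1.eigenvectorUnitary : Matrix n n 𝕜) *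
    Matrix.diagonal (RCLike.ofReal ∘ Real.sqrt ∘ hA.1.eigenvalues) *
    (star hA.1.eigenvectorUnitary : Matrix n n 𝕜)

namespace QProg

/-- The positive-semidefinite square root of a matrix, extended by `0` to all matrices. -/
noncomputable def matSqrt {α : Type*} [Fintype α] [DecidableEq α]
    (A : Matrix α α ℂ) : Matrix α α ℂ :=
  @dite _ A.PosSemidef (Classical.propDecidable _) (fun h => h.sqrt) (fun _ => 0)

/-- The fidelity `F(ρ,σ) = Tr √(√ρ σ √ρ)` of two (density) matrices. -/
noncomputable def fid {α : Type*} [Fintype α] [DecidableEq α]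
    (ρ σ : Matrix α α ℂ) : ℝ :=
  ((matSqrt (matSqrt ρ * σ * matSqrt ρ)).trace).re

/-- A density matrix: positive semidefinite with unit trace. -/
def IsDensity {α : Type*} [Fintype α] [DecidableEq α] (ρ : Matrix α α ℂ) : Prop :=
  ρ.PosSemidef ∧ ρ.trace = 1

/-- An `n`-outcome POVM: positive semidefinite effects summing to the identity. -/
def IsPOVM {α : Type*} [Fintype α] [DecidableEq α] {n : ℕ}
    (E : Fin n → Matrix α α ℂ) : Prop :=
  (∀ i, (E i).PosSemidef) ∧ ∑ i, E i = 1

/-- The outcome distribution `p^E_ρ(i) = Tr[E(i) ρ]`. -/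
noncomputable def outDist {α : Type*} [Fintype α] [DecidableEq α] {n : ℕ}
    (E : Fin n → Matrix α α ℂ) (ρ : Matrix α α ℂ) (i : Fin n) : ℝ :=
  ((E i * ρ).trace).re

/-- The Bhattacharyya coefficient `B(p,q) = ∑ᵢ √(p i) √(q i)`. -/
noncomputable def bhat {n : ℕ} (p q : Fin n → ℝ) : ℝ :=
  ∑ i, Real.sqrt (p i) * Real.sqrt (q i)

/-- `B(E₁,E₂)`: infimum of `B(p^{E₁}_{ρ₁}, p^{E₂}_{ρ₂}) / F(ρ₁,ρ₂)` over pairs of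
density matrices with nonvanishing fidelity. -/
noncomputable def obsB {α : Type*} [Fintype α] [DecidableEq α] {n : ℕ}
    (E₁ E₂ : Fin n → Matrix α α ℂ) : ℝ :=
  sInf { r : ℝ | ∃ ρ₁ ρ₂ : Matrix α α ℂ, IsDensity ρ₁ ∧ IsDensity ρ₂ ∧
    fid ρ₁ ρ₂ ≠ 0 ∧ r = bhat (outDist E₁ ρ₁) (outDist E₂ ρ₂) / fid ρ₁ ρ₂ }

/-- A post-processing from `n` outcomes to `m` outcomes. -/
def IsPostProc {n m : ℕ} (lam : Fin n → Fin m → ℝ) : Prop :=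
  (∀ i y, 0 ≤ lam i y) ∧ ∀ i, ∑ y, lam i y = 1

/-- The action `(λ⋆E)(y) = ∑ᵢ λ(i|y) E(i)` of a post-processing on a POVM. -/
noncomputable def ppStar {α : Type*} [Fintype α] [DecidableEq α] {n m : ℕ}
    (lam : Fin n → Fin m → ℝ) (E : Fin n → Matrix α α ℂ) (y : Fin m) :
    Matrix α α ℂ :=
  ∑ i, (lam i y : ℂ) • E i

/-- The action `(λ⋆p)(y) = ∑ᵢ λ(i|y) p(i)` of a post-processing on a probability vector. -/
noncomputable def ppStarVec {n m : ℕ} (lam : Fin n → Fin m → ℝ) (p : Fin n → ℝ)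
    (y : Fin m) : ℝ :=
  ∑ i, lam i y * p i

/-- A probability vector on `{1,…,n}`. -/
def IsProbVec {n : ℕ} (p : Fin n → ℝ) : Prop :=
  (∀ i, 0 ≤ p i) ∧ ∑ i, p i = 1

/-- `F(λ₁,λ₂)`: infimum of `B(λ₁⋆p, λ₂⋆p)` over probability vectors `p`. -/
noncomputable def ppF {n m : ℕ} (lam₁ lam₂ : Fin n → Fin m → ℝ) : ℝ :=
  sInf { r : ℝ | ∃ p : Fin n → ℝ, IsProbVec p ∧
    r = bhat (ppStarVec lam₁ p) (ppStarVec lam₂ p) }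

/-- A PVM (sharp observable): a POVM all of whose effects are projections. -/
def IsPVM {α : Type*} [Fintype α] [DecidableEq α] {n : ℕ}
    (E : Fin n → Matrix α α ℂ) : Prop :=
  IsPOVM E ∧ ∀ i, E i * E i = E i

/-!
If `A₁ i * A₂ j = 0` whenever `i ≠ j`, expanding `A₁ i = A₁ i * ∑ j, A₂ j` and
`A₂ i = (∑ j, A₁ j) * A₂ i` gives `A₁ i = A₁ i * A₂ i = A₂ i`. So unequal PVMs have outcomes `i ≠ j`
with `A₁ i * A₂ j ≠ 0`. The states proportional to `A₁ i` and `A₂ j` then have nonzero fidelity,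
while the effects of a PVM are mutually orthogonal, so their outcome distributions are concentrated
at `i` and at `j` respectively and have Bhattacharyya coefficient zero.
-/

theorem eq_of_sum_eq_one_of_mul_eq_zero {ι R : Type*} [Fintype ι] [NonAssocSemiring R]
    {e f : ι → R} (he : ∑ i, e i = 1) (hf : ∑ i, f i = 1)
    (hef : Pairwise fun i j => e i * f j = 0) : e = f := by
  funext i
  calc
    e i = ∑ j, e i * f j := by rw [← Finset.mul_sum, hf, mul_one]
    _ = e i * f i := Fintype.sum_eq_single i fun _ hj => hef hj.symm
    _ = ∑ j, e j * f i := (Fintype.sum_eq_single i fun _ hj => hef hj).symm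
    _ = f i := by rw [← Finset.sum_mul, he, one_mul]

theorem mul_eq_zero_of_isStarProjection_of_sum_eq_one {ι R : Type*} [Fintype ι] [NormedRing R]
    [StarRing R] [CStarRing R] [PartialOrder R] [StarOrderedRing R] {p : ι → R}
    (hp : ∀ i, IsStarProjection (p i)) (hsum : ∑ i, p i = 1) :
    Pairwise fun i j => p i * p j = 0 := by
  classical
  intro i j hij
  have hconj (k : ι) : p j * p k * p j = star (p k * p j) * (p k * p j) := by
    rw [star_mul, (hp j).isSelfAdjoint.star_eq, (hp k).isSelfAdjoint.star_eq, mul_assoc, mul_assoc,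
      ← mul_assoc (p k) (p k), (hp k).isIdempotentElem.eq]
  -- Compressing `∑ k, p k = 1` by `p j`, the term `k = j` already accounts for all of `p j`.
  have htotal : ∑ k, p j * p k * p j = p j := by
    rw [← Finset.sum_mul, ← Finset.mul_sum, hsum, mul_one, (hp j).isIdempotentElem.eq]
  have hrest : ∑ k ∈ Finset.univ.erase j, p j * p k * p j = 0 := by
    rwa [← Finset.add_sum_erase _ _ (Finset.mem_univ j), (hp j).isIdempotentElem.eq,
      (hp j).isIdempotentElem.eq, add_eq_left] at htotal
  have hzero : p j * p i * p j = 0 :=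
    (Finset.sum_eq_zero_iff_of_nonneg fun k _ => hconj k ▸ star_mul_self_nonneg _).1 hrest i
      (Finset.mem_erase.2 ⟨hij, Finset.mem_univ i⟩)
  rwa [hconj, CStarRing.star_mul_self_eq_zero_iff] at hzero

variable {α : Type*} [Fintype α]

/-- The density matrix `P / Tr P` proportional to a nonzero positive semidefinite matrix `P`,
used for the states concentrated on a single effect. It is `0` if `Tr P = 0`. -/
def normalizedState (P : Matrix α α ℂ) : Matrix α α ℂ :=
  P.trace⁻¹ • P

theorem normalizedState_mul_eq_zero_iff {P Q : Matrix α α ℂ} (hP : P.PosSemidef)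
    (hQ : Q.PosSemidef) : normalizedState P * normalizedState Q = 0 ↔ P * Q = 0 := by
  rw [normalizedState, normalizedState, smul_mul_smul_comm, smul_eq_zero, mul_eq_zero, inv_eq_zero,
    inv_eq_zero, hP.trace_eq_zero_iff, hQ.trace_eq_zero_iff, or_iff_right_iff_imp]
  rintro (rfl | rfl)
  · exact zero_mul Q
  · exact mul_zero P

variable [DecidableEq α] {n : ℕ}

section Fidelity

open scoped MatrixOrder

theorem matSqrt_eq_cfcSqrt (A : Matrix α α ℂ) : matSqrt A = CFC.sqrt A := by
  by_cases hA : A.PosSemidef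
  · rw [matSqrt, dif_pos hA, CFC.sqrt_eq_real_sqrt A hA.nonneg, cfcₙ_eq_cfc, hA.1.cfc_eq]
    rfl
  · rw [matSqrt, dif_neg hA, CFC.sqrt_of_not_nonneg (Matrix.nonneg_iff_posSemidef.not.2 hA)]

theorem matSqrt_posSemidef (A : Matrix α α ℂ) : (matSqrt A).PosSemidef := by
  rw [matSqrt_eq_cfcSqrt]
  exact Matrix.nonneg_iff_posSemidef.1 (CFC.sqrt_nonneg A)

theorem matSqrt_mul_self {A : Matrix α α ℂ} (hA : A.PosSemidef) : matSqrt A * matSqrt A = A := by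
  rw [matSqrt_eq_cfcSqrt]
  exact CFC.sqrt_mul_sqrt_self A hA.nonneg

theorem matSqrt_eq_zero_iff {A : Matrix α α ℂ} (hA : A.PosSemidef) : matSqrt A = 0 ↔ A = 0 := by
  rw [matSqrt_eq_cfcSqrt]
  exact CFC.sqrt_eq_zero_iff A hA.nonneg

theorem fid_nonneg (ρ σ : Matrix α α ℂ) : 0 ≤ fid ρ σ :=
  (Complex.nonneg_iff.1 (matSqrt_posSemidef _).trace_nonneg).1

theorem matSqrt_mul_matSqrt_eq_zero_iff {A B : Matrix α α ℂ} (hA : A.PosSemidef)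
    (hB : B.PosSemidef) : matSqrt A * matSqrt B = 0 ↔ A * B = 0 := by
  have hleft := Matrix.conjTranspose_mul_self_mul_eq_zero (matSqrt A) (matSqrt B)
  have hright := Matrix.mul_self_mul_conjTranspose_eq_zero (matSqrt B) A
  rw [(matSqrt_posSemidef A).1.eq, matSqrt_mul_self hA] at hleft
  rw [(matSqrt_posSemidef B).1.eq, matSqrt_mul_self hB] at hright
  exact hleft.symm.trans hright.symm

theorem fid_eq_zero_iff {ρ σ : Matrix α α ℂ} (hρ : ρ.PosSemidef) (hσ : σ.PosSemidef) :
    fid ρ σ = 0 ↔ ρ * σ = 0 := by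
  have hsqrt := matSqrt_posSemidef (matSqrt ρ * σ * matSqrt ρ)
  have hfactor : matSqrt ρ * σ * matSqrt ρ =
      (matSqrt ρ * matSqrt σ) * (matSqrt ρ * matSqrt σ)ᴴ := by
    rw [Matrix.conjTranspose_mul, (matSqrt_posSemidef ρ).1.eq, (matSqrt_posSemidef σ).1.eq,
      Matrix.mul_assoc, Matrix.mul_assoc, ← Matrix.mul_assoc (matSqrt σ), matSqrt_mul_self hσ]
  calc
    fid ρ σ = 0 ↔ (matSqrt (matSqrt ρ * σ * matSqrt ρ)).trace = 0 := by
      have him := (Complex.nonneg_iff.1 hsqrt.trace_nonneg).2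
      exact ⟨fun h => Complex.ext h him.symm, fun h => congrArg Complex.re h⟩
    _ ↔ matSqrt ρ * σ * matSqrt ρ = 0 := by
      rw [hsqrt.trace_eq_zero_iff, matSqrt_eq_zero_iff]
      exact hfactor ▸ Matrix.posSemidef_self_mul_conjTranspose _
    _ ↔ matSqrt ρ * matSqrt σ = 0 := by
      rw [hfactor, Matrix.self_mul_conjTranspose_eq_zero]
    _ ↔ ρ * σ = 0 := matSqrt_mul_matSqrt_eq_zero_iff hρ hσ

end Fidelity

theorem isDensity_normalizedState {P : Matrix α α ℂ} (hP : P.PosSemidef) (hP0 : P ≠ 0) :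
    IsDensity (normalizedState P) := by
  refine ⟨hP.smul (inv_nonneg.2 hP.trace_nonneg), ?_⟩
  rw [normalizedState, Matrix.trace_smul, smul_eq_mul,
    inv_mul_cancel₀ (hP.trace_eq_zero_iff.not.2 hP0)]

open scoped MatrixOrder Matrix.Norms.L2Operator in
theorem IsPVM.mul_eq_zero {E : Fin n → Matrix α α ℂ} (hE : IsPVM E) :
    Pairwise fun i j => E i * E j = 0 :=
  mul_eq_zero_of_isStarProjection_of_sum_eq_one (fun i => ⟨hE.2 i, (hE.1.1 i).1⟩) hE.1.2

theorem IsPVM.outDist_normalizedState_eq_zero {E : Fin n → Matrix α α ℂ} (hE : IsPVM E)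
    {i k : Fin n} (hki : k ≠ i) : outDist E (normalizedState (E i)) k = 0 := by
  rw [outDist, normalizedState, Matrix.mul_smul, hE.mul_eq_zero hki, smul_zero, Matrix.trace_zero,
    Complex.zero_re]

theorem bhat_nonneg (p q : Fin n → ℝ) : 0 ≤ bhat p q :=
  Finset.sum_nonneg fun _ _ => mul_nonneg (Real.sqrt_nonneg _) (Real.sqrt_nonneg _)

theorem bhat_eq_zero_of_forall_eq_zero_or {p q : Fin n → ℝ} (h : ∀ k, p k = 0 ∨ q k = 0) :
    bhat p q = 0 :=
  Finset.sum_eq_zero fun k _ => by rcases h k with hk | hk <;> simp [hk]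

theorem obsB_eq_zero_of_bhat_eq_zero {E₁ E₂ : Fin n → Matrix α α ℂ} {ρ₁ ρ₂ : Matrix α α ℂ}
    (hρ₁ : IsDensity ρ₁) (hρ₂ : IsDensity ρ₂) (hfid : fid ρ₁ ρ₂ ≠ 0)
    (hbhat : bhat (outDist E₁ ρ₁) (outDist E₂ ρ₂) = 0) : obsB E₁ E₂ = 0 := by
  refine IsLeast.csInf_eq ⟨⟨ρ₁, ρ₂, hρ₁, hρ₂, hfid, by rw [hbhat, zero_div]⟩, ?_⟩
  rintro _ ⟨σ₁, σ₂, -, -, -, rfl⟩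
  exact div_nonneg (bhat_nonneg _ _) (fid_nonneg _ _)

theorem obsB_eq_zero_of_ne_pvm_general {A₁ A₂ : Fin n → Matrix α α ℂ}
    (hA₁ : IsPVM A₁) (hA₂ : IsPVM A₂) (hne : A₁ ≠ A₂) : obsB A₁ A₂ = 0 := by
  obtain ⟨i, j, hij, hmul⟩ : ∃ i j, i ≠ j ∧ A₁ i * A₂ j ≠ 0 := by
    by_contra! hzero
    exact hne (eq_of_sum_eq_one_of_mul_eq_zero hA₁.1.2 hA₂.1.2 fun i j => hzero i j)
  have hP := hA₁.1.1 i
  have hQ := hA₂.1.1 j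
  have hρ := isDensity_normalizedState hP (left_ne_zero_of_mul hmul)
  have hσ := isDensity_normalizedState hQ (right_ne_zero_of_mul hmul)
  have hfid : fid (normalizedState (A₁ i)) (normalizedState (A₂ j)) ≠ 0 := by
    rwa [Ne, fid_eq_zero_iff hρ.1 hσ.1, normalizedState_mul_eq_zero_iff hP hQ]
  refine obsB_eq_zero_of_bhat_eq_zero hρ hσ hfid (bhat_eq_zero_of_forall_eq_zero_or fun k => ?_)
  rcases ne_or_eq k i with hki | rfl
  · exact .inl (hA₁.outDist_normalizedState_eq_zero hki)
  · exact .inr (hA₂.outDist_normalizedState_eq_zero hij)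

/-- Example 1: `B(A₁,A₂) = 0` for unequal PVMs. -/
theorem obsB_eq_zero_of_ne_pvm {d n : ℕ}
    (A₁ A₂ : Fin n → Matrix (Fin d) (Fin d) ℂ)
    (hA₁ : IsPVM A₁) (hA₂ : IsPVM A₂) (hne : A₁ ≠ A₂) :
    obsB A₁ A₂ = 0 :=
  obsB_eq_zero_of_ne_pvm_general hA₁ hA₂ hne

end QProg
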